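/- For every n ∈ ℤ and every t > 0 with t ≠ 1, the modal kernel satisfies the parity relation K_n^α(1, t) = t · K_n^α(t, 1). -/

import Mathlib

open Real

/-- Parametrization of the infinite straight cone of opening angle `2α`. -/
noncomputable def coneParam (α t θ : ℝ) : EuclideanSpace ℝ (Fin 3) :=
  !₂[sin α * t * cos θ, sin α * t * sin θ, cos α * t]

/-- Outward unit normal of the cone. -/
noncomputable def coneNormal (α θ : ℝ) : EuclideanSpace ℝ (Fin 3) :=
  !₂[cos α * cos θ, cos α * sin θ, -sin α]

/-- The layer-potential kernel of the infinite straight cone. -/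
noncomputable def coneKernel (α t θ t' θ' : ℝ) : ℝ :=
  (inner ℝ (coneParam α t θ - coneParam α t' θ') (coneNormal α θ) : ℝ) /
    ‖coneParam α t' θ' - coneParam α t θ‖ ^ 3

/-- The `n`-th modal kernel `K_n^α(t,t') = (1/(2π)) ∫₀^{2π} e^{−inθ} K^{Γ_α}(t,θ,t',0) dθ`. -/
noncomputable def modalKernel (α : ℝ) (n : ℤ) (t t' : ℝ) : ℂ :=
  ((1 / (2 * π) : ℝ) : ℂ) *
    ∫ θ in (0:ℝ)..(2 * π), Complex.exp (-Complex.I * (n : ℂ) * (θ : ℂ)) * (coneKernel α t θ t' 0 : ℂ)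

theorem coneKernel_swap (α t θ : ℝ) :
    coneKernel α 1 θ t 0 = t * coneKernel α t θ 1 0 := by
  have hn : ‖coneParam α t 0 - coneParam α 1 θ‖ = ‖coneParam α 1 0 - coneParam α t θ‖ := by
    rw [EuclideanSpace.norm_eq, EuclideanSpace.norm_eq]
    congr 1
    simp [coneParam, Fin.sum_univ_three]
    linear_combination (sin α ^ 2 * (1 - t ^ 2)) * (sin_sq_add_cos_sq θ)
  have hi : (inner ℝ (coneParam α 1 θ - coneParam α t 0) (coneNormal α θ) : ℝ)
      = t * inner ℝ (coneParam α t θ - coneParam α 1 0) (coneNormal α θ) := by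
    simp [coneParam, coneNormal, PiLp.inner_apply, Fin.sum_univ_three]
    linear_combination (sin α * cos α * (1 - t ^ 2)) * (sin_sq_add_cos_sq θ)
  unfold coneKernel
  rw [hn, hi, mul_div_assoc]

/-- The parity relation for the modal kernel: `K_n^α(1, t) = t · K_n^α(t, 1)`. -/
theorem modalKernel_parity (α : ℝ) (hα0 : 0 < α) (hαπ : α < π) (hα2 : α ≠ π / 2)
    (n : ℤ) (t : ℝ) (ht : 0 < t) (hne : t ≠ 1) :
    modalKernel α n 1 t = (t : ℂ) * modalKernel α n t 1 := by
  unfold modalKernel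
  rw [mul_left_comm]
  congr 1
  rw [← intervalIntegral.integral_const_mul]
  congr 1
  funext θ
  rw [coneKernel_swap]
  push_cast
  ring
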